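/- arXiv:math/0209383 — 2 statements merged into one kernel-verified Lean document; each statement's English description precedes it below -/
import Mathlib

section
/- Fix n ∈ ℕ, j ∈ ℕ and c > 0. Let T ⊆ ℝⁿ be a compact subset and let S ⊆ (0,∞) × ℝⁿ be a closed subset (of (0,∞) × ℝⁿ) such that for every t > 0 one has dist(T, S_t) ≥ c·t, where S_t = { y ∈ ℝⁿ : (t,y) ∈ S }. Then there exists a C^∞ function ψ : (0,∞) × ℝⁿ → [0,1] such that ψ ≡ 1 on (0,∞) × T, ψ ≡ 0 on S, and the function Ψ : ℝ × ℝⁿ → ℝ defined by Ψ(t,y) = t^{j+1} ψ(t,y) for t > 0 and Ψ(t,y) = 0 for t ≤ 0 is j-times continuously differentiable on all of ℝ × ℝⁿ. -/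
/-!
For `m : ℤ`, a function `A` on `V` extends to a function on `(0, ∞) × V` that is homogeneous of
degree `m`, namely `(t, v) ↦ t ^ m • A (v / t)`, and the derivative of a homogeneous function of
degree `m` is homogeneous of degree `m - 1`. Convolve such a function in the variable `v` with a
measure `ν` whose balls of radius `r` have mass `O(r ^ k)`: if `A` has compact support, the result
is `O(t ^ (m + k))`. Hence in degree `j + 1 - k` it is `O(t ^ (j + 1))`, its derivative is
`O(t ^ j)`, and so on, so that the extension by zero to `t ≤ 0` is of class `C^j`.

For a 1-Lipschitz function `d` on an `n`-dimensional space `E`, take for `ν` the image of Haar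
measure on the graph of `-d` in `E × ℝ`, so that `k = n`, and `A (z, s) = φ z * h s` with `φ` a
mollifier and `h` a bump function. On the slice `E × {0}` the convolution is `t ^ (j + 1)` times the
average `∫ φ z * h (d (y - t z) / t)`, which is `1` where `d y = 0` and `0` where `|d y| ≥ c t`. The
cutoff is obtained from `d = dist(·, T)`.
-/

open Function MeasureTheory Metric Module Set
open scoped ContDiff Convolution NNReal Pointwise Topology

section HomogeneousExtension

variable {V F : Type*} [NormedAddCommGroup V] [NormedSpace ℝ V]
  [NormedAddCommGroup F] [NormedSpace ℝ F] {m : ℤ} {A : V → F} {p : ℝ × V}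

/-- The extension of `A : V → F` from the slice `{1} × V` to a function homogeneous of degree `m` on
the part of `ℝ × V` where the first coordinate does not vanish. Its values at `(0, v)` are junk. -/
noncomputable def homogeneousExtension (m : ℤ) (A : V → F) (p : ℝ × V) : F :=
  p.1 ^ m • A (p.1⁻¹ • p.2)

/-- The derivative along the slice `{1} × V` of the degree `m` homogeneous extension of `A`. It is
the function whose degree `m - 1` homogeneous extension is the derivative of that of `A`. -/
noncomputable def sliceFDeriv (m : ℤ) (A : V → F) (w : V) : ℝ × V →L[ℝ] F :=
  fderiv ℝ (homogeneousExtension m A) (1, w)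

lemma homogeneousExtension_smul {c : ℝ} (hc : c ≠ 0) :
    homogeneousExtension m A (c • p) = c ^ m • homogeneousExtension m A p := by
  simp only [homogeneousExtension, Prod.smul_fst, Prod.smul_snd, smul_eq_mul, mul_inv_rev,
    mul_zpow, smul_smul, inv_mul_cancel_right₀ hc]

lemma contDiffOn_homogeneousExtension {k : WithTop ℕ∞} (hA : ContDiff ℝ k A) :
    ContDiffOn ℝ k (homogeneousExtension m A) {p | p.1 ≠ 0} := by
  intro p hp
  have hinv : ContDiffAt ℝ k (fun q : ℝ × V ↦ q.1⁻¹) p := contDiffAt_fst.inv hp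
  have hzpow : ContDiffAt ℝ k (fun q : ℝ × V ↦ q.1 ^ m) p := by
    cases m with
    | ofNat a => simpa using contDiffAt_fst.pow a
    | negSucc a =>
      simpa only [zpow_negSucc] using! (contDiffAt_fst.pow (a + 1)).inv (pow_ne_zero _ hp)
  exact (hzpow.smul (hA.contDiffAt.comp p (hinv.smul contDiffAt_snd))).contDiffWithinAt

-- Differentiate the relation `H (t • p) = t ^ m • H p` in `p`.
lemma fderiv_homogeneousExtension (hp : p.1 ≠ 0) :
    fderiv ℝ (homogeneousExtension m A) p = homogeneousExtension (m - 1) (sliceFDeriv m A) p := by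
  obtain ⟨t, v⟩ := p
  have hscale : (t, v) = t • ((1 : ℝ), t⁻¹ • v) := by simp [smul_inv_smul₀ hp]
  have hchain : t • fderiv ℝ (homogeneousExtension m A) (t, v) =
      t ^ m • sliceFDeriv m A (t⁻¹ • v) := by
    rw [sliceFDeriv, hscale, ← fderiv_comp_smul, ← Pi.smul_apply, ← fderiv_const_smul_field]
    simp only [homogeneousExtension_smul hp, Pi.smul_def]
  rw [homogeneousExtension, zpow_sub_one₀ hp, mul_comm, mul_smul, ← hchain, inv_smul_smul₀ hp]

lemma contDiff_sliceFDeriv (hA : ContDiff ℝ ∞ A) : ContDiff ℝ ∞ (sliceFDeriv m A) := by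
  have hopen : IsOpen {p : ℝ × V | p.1 ≠ 0} := isOpen_ne_fun continuous_fst continuous_const
  have hfderiv :=
    (contDiffOn_homogeneousExtension (m := m) hA).fderiv_of_isOpen hopen (m := ∞) (by simp)
  exact hfderiv.comp_contDiff (contDiff_prodMk_right 1) fun _ ↦ one_ne_zero

lemma hasCompactSupport_sliceFDeriv (hA : HasCompactSupport A) :
    HasCompactSupport (sliceFDeriv m A) := by
  refine hA.mono' fun w hw ↦ not_not.1 fun hwA ↦ hw ?_
  have hcont : ContinuousAt (fun q : ℝ × V ↦ q.1⁻¹ • q.2) (1, w) :=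
    (continuousAt_fst.inv₀ one_ne_zero).smul continuousAt_snd
  have hzero : ∀ᶠ x in 𝓝 ((1 : ℝ)⁻¹ • w), A x = 0 := by
    simpa only [inv_one, one_smul] using! notMem_tsupport_iff_eventuallyEq.1 hwA
  refine (hasFDerivAt_zero_of_eventually_const (0 : F) ?_).fderiv
  filter_upwards [hcont.eventually hzero] with q hq
  rw [homogeneousExtension, hq, smul_zero]

end HomogeneousExtension

/-- A measure is upper Ahlfors regular of dimension `k` if closed balls of radius `r` have measure
at most a constant times `r ^ k`, uniformly in the centre and in `r ≥ 0`. -/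
def IsUpperAhlforsRegular {V : Type*} [PseudoMetricSpace V] [MeasurableSpace V]
    (ν : Measure V) (k : ℕ) : Prop :=
  ∃ C : ℝ≥0, ∀ (v : V) (r : ℝ≥0), ν (closedBall v r) ≤ C * r ^ k

lemma IsUpperAhlforsRegular.isLocallyFiniteMeasure {V : Type*} [PseudoMetricSpace V]
    [MeasurableSpace V] {ν : Measure V} {k : ℕ} (hν : IsUpperAhlforsRegular ν k) :
    IsLocallyFiniteMeasure ν := by
  obtain ⟨C, hC⟩ := hν
  refine ⟨fun v ↦ ⟨closedBall v (1 : ℝ≥0), closedBall_mem_nhds v one_pos, ?_⟩⟩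
  exact (hC v 1).trans_lt (by simp)

lemma IsUpperAhlforsRegular.map_graph {E : Type*} [NormedAddCommGroup E] [NormedSpace ℝ E]
    [FiniteDimensional ℝ E] [MeasurableSpace E] [BorelSpace E]
    (μ : Measure E) [μ.IsAddHaarMeasure]
    {G : Type*} [PseudoMetricSpace G] [MeasurableSpace G] [OpensMeasurableSpace G]
    [SecondCountableTopology G] {g : E → G} (hg : Measurable g) :
    IsUpperAhlforsRegular (μ.map fun x ↦ (x, g x)) (finrank ℝ E) := by
  have hfin : μ (closedBall 0 1) ≠ ⊤ := measure_closedBall_lt_top.ne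
  refine ⟨(μ (closedBall 0 1)).toNNReal, fun v r ↦ ?_⟩
  calc μ.map (fun x ↦ (x, g x)) (closedBall v r)
      = μ ((fun x ↦ (x, g x)) ⁻¹' closedBall v r) :=
        Measure.map_apply (measurable_id.prodMk hg) measurableSet_closedBall
    _ ≤ μ (closedBall v.1 r) :=
        measure_mono fun x hx ↦ mem_closedBall.2 ((le_max_left _ _).trans (mem_closedBall.1 hx))
    _ = (μ (closedBall 0 1)).toNNReal * r ^ finrank ℝ E := by
        rw [Measure.addHaar_closedBall' μ v.1 r.coe_nonneg, ENNReal.coe_toNNReal hfin, mul_comm,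
          ENNReal.ofReal_pow r.coe_nonneg, ENNReal.ofReal_coe_nnreal]

section HomogeneousConv
variable {V F : Type*} [NormedAddCommGroup V] [NormedSpace ℝ V] [MeasurableSpace V]
  [NormedAddCommGroup F] [NormedSpace ℝ F] {ν : Measure V} {m : ℤ} {A : V → F} {p : ℝ × V}

/-- The convolution with `ν`, in the second variable, of the degree `m` homogeneous extension of
`A`, extended by zero from `(0, ∞) × V` to `ℝ × V`. -/
noncomputable def homogeneousConv (ν : Measure V) (m : ℤ) (A : V → F) (p : ℝ × V) : F :=
  if 0 < p.1 then ∫ u, homogeneousExtension m A (p.1, p.2 - u) ∂ν else 0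

lemma homogeneousConv_of_pos (hp : 0 < p.1) :
    homogeneousConv ν m A p = ∫ u, homogeneousExtension m A (p.1, p.2 - u) ∂ν :=
  if_pos hp

lemma homogeneousConv_of_nonpos (hp : p.1 ≤ 0) : homogeneousConv ν m A p = 0 :=
  if_neg hp.not_gt

lemma homogeneousConv_apply {G : Type*} [NormedAddCommGroup G] [NormedSpace ℝ G]
    [BorelSpace V] [IsLocallyFiniteMeasure ν] {B : V → G →L[ℝ] F}
    (hB : Continuous B) (hB' : HasCompactSupport B) (x : G) :
    homogeneousConv ν m B p x = homogeneousConv ν m (fun w ↦ B w x) p := by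
  rcases le_or_gt p.1 0 with hp | hp
  · rw [homogeneousConv_of_nonpos hp, homogeneousConv_of_nonpos hp, zero_apply]
  · have hcont : Continuous fun v ↦ homogeneousExtension m B (p.1, v) := by
      simp only [homogeneousExtension]
      fun_prop
    have hsupp : HasCompactSupport fun v ↦ homogeneousExtension m B (p.1, v) :=
      (hB'.comp_smul (inv_ne_zero hp.ne')).smul_left (f := fun _ ↦ p.1 ^ m)
    have hint : Integrable (fun u ↦ homogeneousExtension m B (p.1, p.2 - u)) ν :=
      (hcont.comp (continuous_sub_left p.2)).integrable_of_hasCompactSupport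
        (hsupp.comp_homeomorph (.subLeft p.2))
    rw [homogeneousConv_of_pos hp, homogeneousConv_of_pos hp,
      ContinuousLinearMap.integral_apply hint]
    rfl

lemma hasFDerivAt_homogeneousConv [BorelSpace V] [IsLocallyFiniteMeasure ν]
    (hA : ContDiff ℝ 1 A) (hA' : HasCompactSupport A) (hp : 0 < p.1) :
    HasFDerivAt (homogeneousConv ν m A) (homogeneousConv ν (m - 1) (sliceFDeriv m A) p) p := by
  let s := Ioo (p.1 / 2) (2 * p.1)
  have hs : ∀ t ∈ s, 0 < t := fun t ht ↦ (half_pos hp).trans ht.1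
  have hps : p.1 ∈ s := ⟨by linarith, by linarith⟩
  have hK : IsCompact (Icc (p.1 / 2) (2 * p.1) • tsupport A) := isCompact_Icc.smul_set hA'
  have hvanish : ∀ t v, t ∈ s → v ∉ Icc (p.1 / 2) (2 * p.1) • tsupport A →
      homogeneousExtension m A (t, v) = 0 := by
    intro t v ht
    contrapose!
    intro hne
    exact mem_smul.2 ⟨t, Ioo_subset_Icc_self ht, t⁻¹ • v,
      subset_tsupport A (right_ne_zero_of_smul hne), smul_inv_smul₀ (hs t ht).ne' v⟩
  have hsmooth : ContDiffOn ℝ 1 (homogeneousExtension m A) (s ×ˢ univ) :=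
    (contDiffOn_homogeneousExtension hA).mono fun q hq ↦ (hs q.1 hq.1).ne'
  have hconv := hasFDerivAt_convolution_right_with_param (ContinuousLinearMap.lsmul ℝ ℝ)
    (g := fun t v ↦ homogeneousExtension m A (t, v)) isOpen_Ioo hK hvanish
    (locallyIntegrable_const (μ := ν) (1 : ℝ)) hsmooth p hps
  have hderiv : ∀ v, fderiv ℝ (homogeneousExtension m A) (p.1, v) =
      homogeneousExtension (m - 1) (sliceFDeriv m A) (p.1, v) :=
    fun v ↦ fderiv_homogeneousExtension hp.ne'
  refine (hconv.congr_fderiv ?_).congr_of_eventuallyEq ?_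
  · rw [homogeneousConv_of_pos hp]
    simp only [← hderiv]
    refine integral_congr_ae (.of_forall fun u ↦ ContinuousLinearMap.ext fun x ↦ ?_)
    simp [HasUncurry.uncurry]
  · filter_upwards [continuousAt_fst.preimage_mem_nhds (isOpen_Ioo.mem_nhds hps)] with q hq
    simp [homogeneousConv_of_pos (hs q.1 hq), convolution_def]

lemma exists_norm_homogeneousConv_le {k : ℕ} (hν : IsUpperAhlforsRegular ν k)
    (hA : Continuous A) (hA' : HasCompactSupport A) (m : ℤ) :
    ∃ C : ℝ, 0 ≤ C ∧ ∀ p : ℝ × V, 0 < p.1 → ‖homogeneousConv ν (m - k) A p‖ ≤ C * p.1 ^ m := by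
  obtain ⟨C, hC⟩ := hν
  obtain ⟨M, hM⟩ := hA.bounded_above_of_compact_support hA'
  obtain ⟨R, hR⟩ : ∃ R : ℝ≥0, support A ⊆ closedBall 0 R := by
    obtain ⟨R, hR, hsub⟩ := hA'.isCompact.isBounded.subset_closedBall_lt 0 0
    exact ⟨⟨R, hR.le⟩, (subset_tsupport A).trans hsub⟩
  have hM0 : 0 ≤ M := (norm_nonneg _).trans (hM 0)
  refine ⟨M * (C * R ^ k), by positivity, fun p hp ↦ ?_⟩
  lift p.1 to ℝ≥0 using hp.le with t ht
  have hvanish : ∀ u ∉ closedBall p.2 (t * R : ℝ≥0),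
      homogeneousExtension (m - k) A (t, p.2 - u) = 0 := by
    intro u
    contrapose!
    intro hne
    have hmem := hR (right_ne_zero_of_smul hne)
    rw [mem_closedBall_zero_iff, norm_smul, norm_inv, NNReal.norm_eq, inv_mul_le_iff₀ hp] at hmem
    rwa [mem_closedBall', dist_eq_norm, NNReal.coe_mul]
  have hbound : ∀ u ∈ closedBall p.2 (t * R : ℝ≥0),
      ‖homogeneousExtension (m - k) A (t, p.2 - u)‖ ≤ t ^ (m - k) * M := by
    intro u _
    rw [homogeneousExtension, norm_smul, norm_zpow, NNReal.norm_eq]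
    gcongr
    exact hM _
  have hball := hC p.2 (t * R)
  have hreal : ν.real (closedBall p.2 (t * R : ℝ≥0)) ≤ C * (t * R) ^ k :=
    (ENNReal.toReal_mono (by finiteness) hball).trans_eq (by simp)
  calc ‖homogeneousConv ν (m - k) A p‖
      = ‖∫ u in closedBall p.2 (t * R : ℝ≥0), homogeneousExtension (m - k) A (t, p.2 - u) ∂ν‖ := by
        rw [setIntegral_eq_integral_of_forall_compl_eq_zero hvanish,
          homogeneousConv_of_pos (ht ▸ hp), ht]
    _ ≤ t ^ (m - k) * M * ν.real (closedBall p.2 (t * R : ℝ≥0)) :=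
        norm_setIntegral_le_of_norm_le_const (hball.trans_lt (by finiteness)) hbound
    _ ≤ t ^ (m - k) * M * (C * (t * R) ^ k) := by gcongr
    _ = M * (C * R ^ k) * t ^ m := by
        rw [zpow_sub₀ hp.ne', zpow_natCast, mul_pow]
        field_simp

lemma homogeneousConv_isBigO {k : ℕ} (hν : IsUpperAhlforsRegular ν k)
    (hA : Continuous A) (hA' : HasCompactSupport A) (j : ℕ) (hp : p.1 ≤ 0) :
    homogeneousConv ν (j - k) A =O[𝓝 p] fun q ↦ ‖q - p‖ ^ j := by
  obtain ⟨C, hC0, hC⟩ := exists_norm_homogeneousConv_le hν hA hA' j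
  refine .of_bound C (.of_forall fun q ↦ ?_)
  rw [norm_pow, norm_norm]
  rcases le_or_gt q.1 0 with hq | hq
  · rw [homogeneousConv_of_nonpos hq, norm_zero]
    positivity
  · have hfst : q.1 ≤ ‖q - p‖ :=
      calc q.1 ≤ q.1 - p.1 := by linarith
        _ ≤ ‖(q - p).1‖ := le_abs_self _
        _ ≤ ‖q - p‖ := norm_fst_le _
    calc ‖homogeneousConv ν (j - k) A q‖ ≤ C * q.1 ^ (j : ℤ) := hC q hq
      _ ≤ C * ‖q - p‖ ^ j := by rw [zpow_natCast]; gcongr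

variable [BorelSpace V] {k : ℕ}

lemma continuous_homogeneousConv (hν : IsUpperAhlforsRegular ν k) (hA : ContDiff ℝ 1 A)
    (hA' : HasCompactSupport A) {j : ℕ} (hj : 0 < j) :
    Continuous (homogeneousConv ν (j - k) A) := by
  have := hν.isLocallyFiniteMeasure
  refine continuous_iff_continuousAt.2 fun p ↦ ?_
  rcases le_or_gt p.1 0 with hp | hp
  · have hnorm : Filter.Tendsto (fun q : ℝ × V ↦ ‖q - p‖ ^ j) (𝓝 p) (𝓝 0) :=
      (by fun_prop : Continuous fun q : ℝ × V ↦ ‖q - p‖ ^ j).tendsto' p 0 (by simp [hj.ne'])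
    rw [ContinuousAt, homogeneousConv_of_nonpos hp]
    exact (homogeneousConv_isBigO hν hA.continuous hA' j hp).trans_tendsto hnorm
  · exact (hasFDerivAt_homogeneousConv hA hA' hp).continuousAt

lemma hasFDerivAt_homogeneousConv_of_one_lt (hν : IsUpperAhlforsRegular ν k) (hA : ContDiff ℝ 1 A)
    (hA' : HasCompactSupport A) {j : ℕ} (hj : 1 < j) (p : ℝ × V) :
    HasFDerivAt (homogeneousConv ν (j - k) A)
      (homogeneousConv ν (j - k - 1) (sliceFDeriv (j - k) A) p) p := by
  have := hν.isLocallyFiniteMeasure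
  rcases le_or_gt p.1 0 with hp | hp
  · rw [homogeneousConv_of_nonpos hp]
    exact (homogeneousConv_isBigO hν hA.continuous hA' j hp).hasFDerivAt hj
  · exact hasFDerivAt_homogeneousConv hA hA' hp

theorem contDiff_homogeneousConv [FiniteDimensional ℝ V] (hν : IsUpperAhlforsRegular ν k)
    (hA : ContDiff ℝ ∞ A) (hA' : HasCompactSupport A) (j : ℕ) :
    ContDiff ℝ j (homogeneousConv ν (j + 1 - k) A) := by
  have := hν.isLocallyFiniteMeasure
  induction j generalizing A with
  | zero =>
    exact contDiff_zero.2 (mod_cast continuous_homogeneousConv hν (hA.of_le (by simp)) hA' one_pos)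
  | succ j ih =>
    set l : ℤ := (j + 1 : ℕ) + 1 - k with hl
    have hderiv : ∀ p, HasFDerivAt (homogeneousConv ν l A)
        (homogeneousConv ν (l - 1) (sliceFDeriv l A) p) p := fun p ↦ by
      simpa [hl] using hasFDerivAt_homogeneousConv_of_one_lt hν (hA.of_le (by simp)) hA'
        (j := j + 1 + 1) (by simp) p
    have hB := contDiff_sliceFDeriv (m := l) hA
    have hB' := hasCompactSupport_sliceFDeriv (m := l) hA'
    rw [Nat.cast_succ, contDiff_succ_iff_fderiv_apply]
    refine ⟨fun p ↦ (hderiv p).differentiableAt, by simp, fun x ↦ ?_⟩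
    simp only [(hderiv _).fderiv, homogeneousConv_apply hB.continuous hB']
    rw [show l - 1 = j + 1 - k by rw [hl]; push_cast; ring]
    exact ih (hB.clm_apply contDiff_const) (hB'.comp_left (g := fun f : ℝ × V →L[ℝ] F ↦ f x) rfl)

end HomogeneousConv

section ScaledAverage

variable {E : Type*} [NormedAddCommGroup E] [NormedSpace ℝ E] [MeasurableSpace E]
  {μ : Measure E} {φ : E → ℝ} {h : ℝ → ℝ} {d : E → ℝ}

/-- The average of `x ↦ h (d x / t)` around `y` at scale `t`, at `p = (t, y)` and with weight `φ`,
which is meant to have integral one. This is the cutoff function. At `t = 0` its value is junk. -/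
noncomputable def scaledAverage (μ : Measure E) (φ : E → ℝ) (h : ℝ → ℝ) (d : E → ℝ)
    (p : ℝ × E) : ℝ :=
  ∫ z, φ z * h (p.1⁻¹ * d (p.2 - p.1 • z)) ∂μ

lemma scaledAverage_mem_Icc (hφ : ∀ z, 0 ≤ φ z) (hφ1 : ∫ z, φ z ∂μ = 1)
    (hh : ∀ s, h s ∈ Icc 0 1) (p : ℝ × E) : scaledAverage μ φ h d p ∈ Icc 0 1 := by
  have hint : Integrable φ μ := .of_integral_ne_zero (hφ1 ▸ one_ne_zero)
  refine ⟨integral_nonneg fun z ↦ mul_nonneg (hφ z) (hh _).1, ?_⟩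
  rw [← hφ1]
  exact integral_mono_of_nonneg (.of_forall fun z ↦ mul_nonneg (hφ z) (hh _).1) hint
    (.of_forall fun z ↦ mul_le_of_le_one_right (hφ z) (hh _).2)

lemma scaledAverage_eq_of_forall_support {a : ℝ} {p : ℝ × E} (hφ1 : ∫ z, φ z ∂μ = 1)
    (ha : ∀ z ∈ support φ, h (p.1⁻¹ * d (p.2 - p.1 • z)) = a) :
    scaledAverage μ φ h d p = a := by
  have hconst : ∀ z, φ z * h (p.1⁻¹ * d (p.2 - p.1 • z)) = φ z * a := fun z ↦ by
    by_cases hz : φ z = 0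
    · simp only [hz, zero_mul]
    · rw [ha z hz]
  simp only [scaledAverage, hconst, integral_mul_const, hφ1, one_mul]

variable [FiniteDimensional ℝ E] [BorelSpace E] [μ.IsAddHaarMeasure]

lemma homogeneousConv_map_graph (hφ : Continuous φ) (hh : Continuous h) (hd : Measurable d)
    {t : ℝ} (ht : 0 < t) (y : E) (m : ℤ) :
    homogeneousConv (μ.map fun x ↦ (x, -d x)) (m - finrank ℝ E) (fun w ↦ φ w.1 * h w.2)
      (t, (y, 0)) = t ^ m * scaledAverage μ φ h d (t, y) := by
  have hcont : Continuous fun u : E × ℝ ↦ homogeneousExtension (m - finrank ℝ E)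
      (fun w : E × ℝ ↦ φ w.1 * h w.2) (t, (y, 0) - u) := by
    simp only [homogeneousExtension]
    fun_prop
  have hchange : ∫ x, φ (t⁻¹ • (y - x)) * h (t⁻¹ * d x) ∂μ =
      t ^ finrank ℝ E * scaledAverage μ φ h d (t, y) :=
    calc ∫ x, φ (t⁻¹ • (y - x)) * h (t⁻¹ * d x) ∂μ
        = ∫ x, φ (t⁻¹ • x) * h (t⁻¹ * d (y - x)) ∂μ := by
          rw [← integral_sub_left_eq_self _ μ y]
          simp only [sub_sub_cancel]
      _ = ∫ x, φ (t⁻¹ • x) * h (t⁻¹ * d (y - t • t⁻¹ • x)) ∂μ := by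
          simp only [smul_inv_smul₀ ht.ne']
      _ = t ^ finrank ℝ E * scaledAverage μ φ h d (t, y) :=
          Measure.integral_comp_inv_smul_of_nonneg μ
            (fun z ↦ φ z * h (t⁻¹ * d (y - t • z))) ht.le
  rw [homogeneousConv_of_pos ht, integral_map (by fun_prop) hcont.aestronglyMeasurable]
  simp only [homogeneousExtension, Prod.mk_sub_mk, sub_neg_eq_add, zero_add, Prod.smul_mk,
    smul_eq_mul, integral_const_mul, hchange]
  rw [zpow_sub₀ ht.ne', zpow_natCast]
  field_simp

lemma contDiff_pow_mul_scaledAverage (hφ : ContDiff ℝ ∞ φ) (hφ' : HasCompactSupport φ)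
    (hh : ContDiff ℝ ∞ h) (hh' : HasCompactSupport h) (hd : Measurable d) (j : ℕ) :
    ContDiff ℝ j fun p : ℝ × E ↦
      if 0 < p.1 then p.1 ^ (j + 1) * scaledAverage μ φ h d p else 0 := by
  have hA : ContDiff ℝ ∞ fun w : E × ℝ ↦ φ w.1 * h w.2 :=
    (hφ.comp contDiff_fst).mul (hh.comp contDiff_snd)
  have hA' : HasCompactSupport fun w : E × ℝ ↦ φ w.1 * h w.2 := by
    refine .intro (hφ'.isCompact.prod hh'.isCompact) fun w hw ↦ ?_
    rcases not_and_or.1 hw with hw | hw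
    · rw [image_eq_zero_of_notMem_tsupport hw, zero_mul]
    · rw [image_eq_zero_of_notMem_tsupport hw, mul_zero]
  have hconv := contDiff_homogeneousConv (IsUpperAhlforsRegular.map_graph μ hd.neg) hA hA' j
  have hincl : ContDiff ℝ j fun p : ℝ × E ↦ (p.1, (p.2, (0 : ℝ))) := by fun_prop
  convert hconv.comp hincl using 2 with p
  rcases le_or_gt p.1 0 with hp | hp
  · exact (if_neg hp.not_gt).trans (homogeneousConv_of_nonpos (p := (p.1, p.2, 0)) hp).symm
  · rw [if_pos hp, ← zpow_natCast, Nat.cast_succ]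
    exact (homogeneousConv_map_graph hφ.continuous hh.continuous hd hp p.2 (j + 1)).symm

lemma contDiffOn_scaledAverage (hφ : ContDiff ℝ ∞ φ) (hφ' : HasCompactSupport φ)
    (hh : ContDiff ℝ ∞ h) (hh' : HasCompactSupport h) (hd : Measurable d) :
    ContDiffOn ℝ ∞ (scaledAverage μ φ h d) (Ioi 0 ×ˢ univ) := by
  refine contDiffOn_infty.2 fun j ↦ ?_
  have hpow : ContDiffOn ℝ j (fun p : ℝ × E ↦ (p.1 ^ (j + 1))⁻¹) (Ioi 0 ×ˢ univ) :=
    (contDiff_fst.pow (j + 1)).contDiffOn.inv fun p hp ↦ (pow_pos hp.1 _).ne'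
  refine (hpow.mul
    (contDiff_pow_mul_scaledAverage (μ := μ) hφ hφ' hh hh' hd j).contDiffOn).congr fun p hp ↦ ?_
  rw [if_pos (mem_Ioi.1 hp.1), inv_mul_cancel_left₀ (pow_pos hp.1 _).ne']

end ScaledAverage

section Cutoff

variable {E : Type*} [NormedAddCommGroup E] [NormedSpace ℝ E]

lemma abs_inv_mul_sub_inv_mul_le_norm_of_lipschitzWith_one {d : E → ℝ}
    (hd : LipschitzWith 1 d) {t : ℝ} (ht : 0 < t) (y z : E) :
    |t⁻¹ * d (y - t • z) - t⁻¹ * d y| ≤ ‖z‖ := by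
  have hdist : |d (y - t • z) - d y| ≤ t * ‖z‖ := by
    simpa [dist_eq_norm, norm_smul, abs_of_pos ht] using hd.dist_le_mul (y - t • z) y
  rwa [← mul_sub, abs_mul, abs_of_pos (inv_pos.2 ht), inv_mul_le_iff₀ ht]

variable [FiniteDimensional ℝ E]

theorem exists_cutoff_of_lipschitzWith_one {d : E → ℝ} (hd : LipschitzWith 1 d)
    {c : ℝ} (hc : 0 < c) :
    ∃ ψ : ℝ × E → ℝ,
      ContDiffOn ℝ ∞ ψ (Ioi 0 ×ˢ univ) ∧
      (∀ p, ψ p ∈ Icc 0 1) ∧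
      (∀ t, 0 < t → ∀ y, d y = 0 → ψ (t, y) = 1) ∧
      (∀ t, 0 < t → ∀ y, c * t ≤ |d y| → ψ (t, y) = 0) ∧
      ∀ j : ℕ, ContDiff ℝ j fun p : ℝ × E ↦ if 0 < p.1 then p.1 ^ (j + 1) * ψ p else 0 := by
  borelize E
  let μ : Measure E := Measure.addHaar
  let f : ContDiffBump (0 : E) := ⟨c / 6, c / 3, by positivity, by linarith⟩
  let h : ContDiffBump (0 : ℝ) := ⟨c / 3, 2 * c / 3, by positivity, by linarith⟩
  have hf1 : ∫ z, f.normed μ z ∂μ = 1 := f.integral_normed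
  have hfsupp : ∀ z ∈ support (f.normed μ), ‖z‖ < c / 3 := fun z hz ↦
    mem_ball_zero_iff.1 (f.support_normed_eq (μ := μ) ▸ hz)
  have hdm : Measurable d := hd.continuous.measurable
  refine ⟨scaledAverage μ (f.normed μ) h d,
    contDiffOn_scaledAverage f.contDiff_normed f.hasCompactSupport_normed h.contDiff
      h.hasCompactSupport hdm,
    scaledAverage_mem_Icc f.nonneg_normed hf1 fun s ↦ ⟨h.nonneg, h.le_one⟩,
    fun t ht y hy ↦ ?_, fun t ht y hy ↦ ?_,
    contDiff_pow_mul_scaledAverage f.contDiff_normed f.hasCompactSupport_normed h.contDiff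
      h.hasCompactSupport hdm⟩
  · refine scaledAverage_eq_of_forall_support hf1 fun z hz ↦
      h.one_of_mem_closedBall (mem_closedBall_zero_iff.2 ?_)
    have hclose := abs_inv_mul_sub_inv_mul_le_norm_of_lipschitzWith_one hd ht y z
    rw [hy, mul_zero, sub_zero] at hclose
    exact hclose.trans (hfsupp z hz).le
  · refine scaledAverage_eq_of_forall_support hf1 fun z hz ↦ h.zero_of_le_dist ?_
    have hlow : c ≤ |t⁻¹ * d y| := by
      rwa [abs_mul, abs_of_pos (inv_pos.2 ht), le_inv_mul_iff₀ ht, mul_comm]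
    have hclose := abs_inv_mul_sub_inv_mul_le_norm_of_lipschitzWith_one hd ht y z
    rw [abs_sub_comm] at hclose
    have htri := abs_sub_abs_le_abs_sub (t⁻¹ * d y) (t⁻¹ * d (y - t • z))
    rw [Real.dist_0_eq_abs]
    change 2 * c / 3 ≤ _
    linarith [hfsupp z hz]

theorem stmt_3_general (T : Set E) {c : ℝ} (hc : 0 < c) :
    ∃ ψ : ℝ × E → ℝ,
      ContDiffOn ℝ ∞ ψ (Ioi 0 ×ˢ univ) ∧
      (∀ p, ψ p ∈ Icc 0 1) ∧
      (∀ t, 0 < t → ∀ x ∈ T, ψ (t, x) = 1) ∧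
      (∀ t, 0 < t → ∀ y, (∀ x ∈ T, c * t ≤ dist x y) → ψ (t, y) = 0) ∧
      ∀ j : ℕ, ContDiff ℝ j fun p : ℝ × E ↦ if 0 < p.1 then p.1 ^ (j + 1) * ψ p else 0 := by
  rcases T.eq_empty_or_nonempty with rfl | hT
  · exact ⟨0, contDiffOn_const, by simp, by simp, by simp, by simpa using fun _ ↦ contDiff_const⟩
  · obtain ⟨ψ, hsmooth, hrange, hone, hzero, hext⟩ :=
      exists_cutoff_of_lipschitzWith_one (lipschitz_infDist_pt T) hc
    refine ⟨ψ, hsmooth, hrange, fun t ht x hx ↦ hone t ht x (infDist_zero_of_mem hx),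
      fun t ht y hy ↦ hzero t ht y ?_, hext⟩
    rw [abs_of_nonneg infDist_nonneg]
    exact (le_infDist hT).2 fun x hx ↦ dist_comm x y ▸ hy x hx

end Cutoff

/-- Whitney-type cutoff lemma: given a compact `T ⊆ ℝⁿ` and a set `S` closed in
`(0,∞) × ℝⁿ` whose slices `S_t` stay at distance `≥ c·t` from `T`, there is a smooth
`ψ : (0,∞) × ℝⁿ → [0,1]` with `ψ ≡ 1` on `(0,∞) × T`, `ψ ≡ 0` on `S`, such that
`t^{j+1} ψ(t,y)` (extended by `0` for `t ≤ 0`) is `Cʲ` on all of `ℝ × ℝⁿ`. -/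
theorem stmt_3 (n j : ℕ) (c : ℝ) (hc : 0 < c)
    (T : Set (EuclideanSpace ℝ (Fin n))) (hT : IsCompact T)
    (S : Set (ℝ × EuclideanSpace ℝ (Fin n)))
    (hSsub : S ⊆ Set.Ioi (0 : ℝ) ×ˢ (Set.univ : Set (EuclideanSpace ℝ (Fin n))))
    (hSclosed : ∃ S' : Set (ℝ × EuclideanSpace ℝ (Fin n)), IsClosed S' ∧
      S = S' ∩ Set.Ioi (0 : ℝ) ×ˢ (Set.univ : Set (EuclideanSpace ℝ (Fin n))))
    (hdist : ∀ t : ℝ, 0 < t → ∀ x ∈ T, ∀ y : EuclideanSpace ℝ (Fin n),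
      (t, y) ∈ S → c * t ≤ dist x y) :
    ∃ ψ : ℝ × EuclideanSpace ℝ (Fin n) → ℝ,
      ContDiffOn ℝ (⊤ : ℕ∞) ψ
        (Set.Ioi (0 : ℝ) ×ˢ (Set.univ : Set (EuclideanSpace ℝ (Fin n)))) ∧
      (∀ p : ℝ × EuclideanSpace ℝ (Fin n), 0 < p.1 → ψ p ∈ Set.Icc (0 : ℝ) 1) ∧
      (∀ t : ℝ, 0 < t → ∀ x ∈ T, ψ (t, x) = 1) ∧
      (∀ p ∈ S, ψ p = 0) ∧
      ContDiff ℝ (j : ℕ∞)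
        (fun p : ℝ × EuclideanSpace ℝ (Fin n) =>
          if 0 < p.1 then p.1 ^ (j + 1) * ψ p else 0) := by
  obtain ⟨ψ, hsmooth, hrange, hone, hzero, hext⟩ := stmt_3_general T hc
  exact ⟨ψ, hsmooth, fun p _ ↦ hrange p, hone, fun p hp ↦ hzero p.1 (hSsub hp).1 p.2
    fun x hx ↦ hdist p.1 (hSsub hp).1 x hx p.2 hp, hext j⟩
end

section
/- Let r ≥ 0 be an integer, let Λ be a group, let C be a free abelian group of rank r (C ≅ ℤ^r), and let Γ = C × Λ be their direct product (so that C is central in Γ and the extension 1 → C → Γ → Λ → 1 splits). Assume that the rational group cohomology spaces H^p(Λ, ℚ) and H^p(Γ, ℚ) (with trivial coefficients) are finite-dimensional for all p and vanish for all p larger than some bound. Then χ(Λ, ℚ) = χ_r(Γ, ℚ), i.e. ∑_p (−1)^p dim_ℚ H^p(Λ, ℚ) = ∑_p (−1)^{p+r} binom(p, r) dim_ℚ H^p(Γ, ℚ). -/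
/-!
If `χ : G → ℤ` sends a central element `t` to `1` and `t` acts trivially on `A`, then `t - 1` is a
surjective endomorphism, with kernel `A`, of the representation of `G` coinduced from the
restriction of `A` to `ker χ`. Central elements act trivially on cohomology, so `t - 1` induces
zero, and by Shapiro's lemma the long exact sequence breaks up into
`0 → Hⁿ(ker χ, A) → Hⁿ⁺¹(G, A) → Hⁿ⁺¹(ker χ, A) → 0`. Hence each factor `ℤ` of `Γ = ℤʳ × Λ`
multiplies the Poincaré polynomial by `1 + X`. Finally, `χ_r` is the `r`-th Taylor coefficient of
that polynomial at `-1`, and multiplication by `(1 + X) ^ r` shifts these coefficients by `r`.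
-/

noncomputable section

open CategoryTheory

universe u

section Coinduction

variable {k G : Type u} [CommRing k] [Group G] (S : Subgroup G) (A : Rep.{u} k G)

/-- The embedding `a ↦ (g ↦ g • a)` of a representation into the one coinduced from its restriction
to a subgroup, i.e. the unit of the restriction-coinduction adjunction. -/
abbrev toCoind : A ⟶ Rep.coind S.subtype (Rep.res S.subtype A) :=
  Rep.resCoindToHom _ A _ (𝟙 _)

instance mono_toCoind : Mono (toCoind S A) := by
  rw [Rep.mono_iff_injective]
  intro a b h
  simpa using congrFun (congrArg Subtype.val h) 1

lemma shortExact_cokernel_toCoind :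
    (ShortComplex.mk _ _ (Limits.cokernel.condition (toCoind S A))).ShortExact where
  exact := ShortComplex.exact_cokernel _
  mono_f := inferInstance
  epi_g := inferInstance

lemma isZero_groupCohomology_succ_coind [Subsingleton S] (B : Rep.{u} k S) (n : ℕ) :
    Limits.IsZero (groupCohomology (Rep.coind S.subtype B) (n + 1)) :=
  (isZero_groupCohomology_succ_of_subsingleton B n).of_iso (groupCohomology.coindIso B (n + 1))

end Coinduction

section Center

variable {k G : Type u} [CommRing k] [Group G]

/-- The action of a central element `z` on a representation, as a morphism of representations. -/
abbrev centralEnd (A : Rep.{u} k G) {z : G} (hz : z ∈ Submonoid.center G) : A ⟶ A :=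
  Rep.ofHom (Representation.IntertwiningMap.centralMul A.ρ z hz)

lemma centralEnd_comp {A B : Rep.{u} k G} (f : A ⟶ B) {z : G} (hz : z ∈ Submonoid.center G) :
    centralEnd A hz ≫ f = f ≫ centralEnd B hz := by
  ext x
  exact Rep.hom_comm_apply f z x

-- Dimension shifting along the embedding into the representation coinduced from the trivial group.
theorem map_centralEnd (A : Rep.{u} k G) {z : G} (hz : z ∈ Submonoid.center G) (n : ℕ) :
    groupCohomology.map (MonoidHom.id G) (centralEnd A hz) n = 𝟙 _ := by
  induction n generalizing A with
  | zero =>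
    rw [← cancel_mono (groupCohomology.H0Iso A).hom, groupCohomology.map_id_comp_H0Iso_hom]
    ext x
    exact Subtype.ext (((groupCohomology.H0Iso A).hom x).2 z)
  | succ n ih =>
    have hX := shortExact_cokernel_toCoind ⊥ A
    have : Epi (groupCohomology.δ hX n (n + 1) rfl) :=
      groupCohomology.epi_δ_of_isZero hX n (isZero_groupCohomology_succ_coind _ _ n)
    let F : ShortComplex.mk _ _ (Limits.cokernel.condition (toCoind ⊥ A)) ⟶
        ShortComplex.mk _ _ (Limits.cokernel.condition (toCoind ⊥ A)) :=
      { τ₁ := centralEnd _ hz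
        τ₂ := centralEnd _ hz
        τ₃ := centralEnd _ hz
        comm₁₂ := centralEnd_comp _ hz
        comm₂₃ := centralEnd_comp _ hz }
    rw [← cancel_epi (groupCohomology.δ hX n (n + 1) rfl),
      groupCohomology.δ_naturality hX hX F, ih, Category.id_comp, Category.comp_id]

lemma map_centralEnd_sub_id (A : Rep.{u} k G) {z : G} (hz : z ∈ Submonoid.center G) (n : ℕ) :
    groupCohomology.map (MonoidHom.id G) (centralEnd A hz - 𝟙 A) n = 0 := by
  change HomologicalComplex.homologyMap
    ((groupCohomology.cochainsFunctor k G).map (centralEnd A hz - 𝟙 A)) n = 0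
  rw [Functor.map_sub, HomologicalComplex.homologyMap_sub, sub_eq_zero]
  exact (map_centralEnd A hz n).trans (groupCohomology.map_id ..).symm

end Center

lemma exists_int_antidifference {M : Type*} [AddCommGroup M] (y : ℤ → M) :
    ∃ x : ℤ → M, ∀ n, x (n + 1) - x n = y n := by
  let x (n : ℤ) : M :=
    Int.inductionOn' n 0 0 (fun m _ a ↦ a + y m) fun m _ a ↦ a - y (m - 1)
  refine ⟨x, fun n ↦ ?_⟩
  rcases le_or_gt 0 n with hn | hn
  · rw [sub_eq_iff_eq_add']
    exact Int.inductionOn'_add_one hn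
  · have h : x (n + 1 - 1) = x (n + 1) - y (n + 1 - 1) := Int.inductionOn'_sub_one (by lia)
    rw [add_sub_cancel_right] at h
    rw [h, sub_sub_cancel]

section Splitting

variable {k G : Type u} [CommRing k] [Group G] {χ : G →* Multiplicative ℤ} {A : Rep.{u} k G} {t : G}

lemma mul_zpow_inv_mem_ker (hχ : χ t = Multiplicative.ofAdd 1) (g : G) :
    g * (t ^ (χ g).toAdd)⁻¹ ∈ χ.ker := by
  simp [MonoidHom.mem_ker, hχ, ← ofAdd_zsmul]

lemma coind_ker_apply (hχ : χ t = Multiplicative.ofAdd 1) (htA : t ∈ A.ρ.ker)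
    (f : Rep.coind χ.ker.subtype (Rep.res χ.ker.subtype A)) (g : G) :
    f.1 g = A.ρ g (f.1 (t ^ (χ g).toAdd)) := by
  have hf := f.2 ⟨_, mul_zpow_inv_mem_ker hχ g⟩ (t ^ (χ g).toAdd)
  have hρ : A.ρ (t ^ (χ g).toAdd)⁻¹ = 1 := inv_mem (zpow_mem htA _)
  simpa [hρ] using hf

/-- The sequence `A ⟶ coind A ⟶ coind A` with second map `t - 1`, where `coind A` is coinduced from
the restriction of `A` to the kernel of `χ` and `t` is a central element acting trivially on `A`.
It computes the cohomology of `G` from that of `ker χ`. -/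
abbrev coindSeq (χ : G →* Multiplicative ℤ) (ht : t ∈ Submonoid.center G) (htA : t ∈ A.ρ.ker) :
    ShortComplex (Rep.{u} k G) :=
  ShortComplex.mk (toCoind χ.ker A) (centralEnd _ ht - 𝟙 _) (by
    rw [Preadditive.comp_sub, ← centralEnd_comp, Category.comp_id, sub_eq_zero]
    ext a x
    exact congrArg (fun b ↦ ((toCoind χ.ker A).hom b).1 x) (LinearMap.congr_fun htA a))

lemma coindSeq_exact (ht : t ∈ Submonoid.center G) (hχ : χ t = Multiplicative.ofAdd 1)
    (htA : t ∈ A.ρ.ker) :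
    (coindSeq χ ht htA).Exact := by
  rw [← ShortComplex.exact_map_iff_of_faithful _ (forget₂ (Rep k G) (ModuleCat k)),
    ShortComplex.moduleCat_exact_iff]
  intro (f : Rep.coind χ.ker.subtype (Rep.res χ.ker.subtype A)) hf
  have hf (g : G) : f.1 (g * t) = f.1 g := sub_eq_zero.1 (congrFun (congrArg Subtype.val hf) g)
  have hft (n : ℤ) : f.1 (t ^ n) = f.1 1 := by
    induction n using Int.induction_on with
    | zero => rw [zpow_zero]
    | succ i ih => rw [zpow_add_one, hf, ih]
    | pred i ih => rw [← ih, ← hf, ← zpow_add_one, sub_add_cancel]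
  refine ⟨f.1 1, Subtype.ext (funext fun g ↦ ?_)⟩
  exact (congrArg (A.ρ g) (hft _)).symm.trans (coind_ker_apply hχ htA f g).symm

lemma centralEnd_sub_id_surjective (ht : t ∈ Submonoid.center G) (hχ : χ t = Multiplicative.ofAdd 1)
    (htA : t ∈ A.ρ.ker) :
    Function.Surjective
      (centralEnd (Rep.coind χ.ker.subtype (Rep.res χ.ker.subtype A)) ht - 𝟙 _).hom := by
  intro y
  obtain ⟨x, hx⟩ := exists_int_antidifference fun n : ℤ ↦ y.1 (t ^ n)
  have hχt (g : G) : (χ (g * t)).toAdd = (χ g).toAdd + 1 := by simp [hχ]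
  have hρt (g : G) : A.ρ (g * t) = A.ρ g := by
    rw [map_mul, MonoidHom.mem_ker.1 htA, mul_one]
  refine ⟨⟨fun g ↦ A.ρ g (x (χ g).toAdd), fun s g ↦ ?_⟩, Subtype.ext (funext fun g ↦ ?_)⟩
  · simp [MonoidHom.mem_ker.1 s.2]
  · calc A.ρ (g * t) (x (χ (g * t)).toAdd) - A.ρ g (x (χ g).toAdd)
      _ = A.ρ g (y.1 (t ^ (χ g).toAdd)) := by rw [hχt, hρt, ← map_sub, hx]
      _ = y.1 g := (coind_ker_apply hχ htA y g).symm

lemma coindSeq_shortExact (ht : t ∈ Submonoid.center G) (hχ : χ t = Multiplicative.ofAdd 1)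
    (htA : t ∈ A.ρ.ker) :
    (coindSeq χ ht htA).ShortExact where
  exact := coindSeq_exact ht hχ htA
  mono_f := mono_toCoind _ _
  epi_g := (Rep.epi_iff_surjective _).2 (centralEnd_sub_id_surjective ht hχ htA)

lemma isIso_map_zero_toCoind_ker (ht : t ∈ Submonoid.center G)
    (hχ : χ t = Multiplicative.ofAdd 1) (htA : t ∈ A.ρ.ker) :
    IsIso (groupCohomology.map (MonoidHom.id G) (toCoind χ.ker A) 0) := by
  have : Epi (groupCohomology.map (MonoidHom.id G) (toCoind χ.ker A) 0) :=
    (groupCohomology.mapShortComplex₂_exact (coindSeq_shortExact ht hχ htA) 0).epi_f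
      (map_centralEnd_sub_id _ ht 0)
  exact isIso_of_mono_of_epi _

theorem mapShortComplex₁_coindSeq_shortExact (ht : t ∈ Submonoid.center G)
    (hχ : χ t = Multiplicative.ofAdd 1) (htA : t ∈ A.ρ.ker) (n : ℕ) :
    (groupCohomology.mapShortComplex₁ (coindSeq_shortExact ht hχ htA)
      (rfl : n + 1 = n + 1)).ShortExact where
  exact := groupCohomology.mapShortComplex₁_exact _ rfl
  mono_f := (groupCohomology.mapShortComplex₃_exact (coindSeq_shortExact ht hχ htA) rfl).mono_g
    (map_centralEnd_sub_id _ ht n)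
  epi_g := (groupCohomology.mapShortComplex₂_exact (coindSeq_shortExact ht hχ htA) (n + 1)).epi_f
    (map_centralEnd_sub_id _ ht (n + 1))

end Splitting

section PoincareSeries

variable {k : Type u} [Field k] {G H : Type u} [Group G] [Group H]

/-- The Poincaré series `∑ₚ dim Hᵖ(G, A) Xᵖ` of the cohomology of a group. Infinite-dimensional
cohomology spaces contribute `0`. -/
def poincareSeries (A : Rep.{u} k G) : PowerSeries ℤ :=
  PowerSeries.mk fun p ↦ (Module.finrank k (groupCohomology A p) : ℤ)

/-- The isomorphism on group cohomology induced by a group isomorphism `e`, with coefficients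
restricted along `e`. -/
def groupCohomologyResIso (e : G ≃* H) (A : Rep.{u} k H) (n : ℕ) :
    groupCohomology (Rep.res (e : G →* H) A) n ≅ groupCohomology A n :=
  groupCohomology.mapIso e (LinearEquiv.refl k A) (fun _ ↦ rfl) n

lemma finite_groupCohomology_res_mulEquiv (e : G ≃* H) (A : Rep.{u} k H)
    (hA : ∀ n, Module.Finite k (groupCohomology A n)) (n : ℕ) :
    Module.Finite k (groupCohomology (Rep.res (e : G →* H) A) n) :=
  have := hA n
  .equiv (groupCohomologyResIso e A n).symm.toLinearEquiv

lemma poincareSeries_res_mulEquiv (e : G ≃* H) (A : Rep.{u} k H) :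
    poincareSeries (Rep.res (e : G →* H) A) = poincareSeries A := by
  ext n
  simp only [poincareSeries, PowerSeries.coeff_mk,
    (groupCohomologyResIso e A n).toLinearEquiv.finrank_eq]

lemma nonempty_linearEquiv_prod_of_shortExact {S : ShortComplex (ModuleCat.{u} k)}
    (hS : S.ShortExact) :
    Nonempty (S.X₂ ≃ₗ[k] S.X₁ × S.X₃) := by
  obtain ⟨l, hl⟩ := S.g.hom.exists_rightInverse_of_surjective
    (LinearMap.range_eq_top.2 hS.moduleCat_surjective_g)
  have hexact := (ShortComplex.ShortExact.moduleCat_exact_iff_function_exact S).1 hS.exact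
  exact ⟨(hexact.splitSurjectiveEquiv hS.moduleCat_injective_f ⟨l, hl⟩).1⟩

section Ker

variable {χ : G →* Multiplicative ℤ} {A : Rep.{u} k G} {t : G}

lemma nonempty_groupCohomology_zero_equiv_ker (ht : t ∈ Submonoid.center G)
    (hχ : χ t = Multiplicative.ofAdd 1) (htA : t ∈ A.ρ.ker) :
    Nonempty (groupCohomology A 0 ≃ₗ[k] groupCohomology (Rep.res χ.ker.subtype A) 0) :=
  have := isIso_map_zero_toCoind_ker ht hχ htA
  ⟨(asIso (groupCohomology.map (MonoidHom.id G) (toCoind χ.ker A) 0) ≪≫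
    groupCohomology.coindIso _ 0).toLinearEquiv⟩

theorem nonempty_groupCohomology_succ_equiv_ker (ht : t ∈ Submonoid.center G)
    (hχ : χ t = Multiplicative.ofAdd 1) (htA : t ∈ A.ρ.ker) (n : ℕ) :
    Nonempty (groupCohomology A (n + 1) ≃ₗ[k]
      groupCohomology (Rep.res χ.ker.subtype A) n ×
        groupCohomology (Rep.res χ.ker.subtype A) (n + 1)) := by
  obtain ⟨φ⟩ :=
    nonempty_linearEquiv_prod_of_shortExact (mapShortComplex₁_coindSeq_shortExact ht hχ htA n)
  exact ⟨φ.trans ((groupCohomology.coindIso _ n).toLinearEquiv.prodCongr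
    (groupCohomology.coindIso _ (n + 1)).toLinearEquiv)⟩

lemma finite_groupCohomology_of_ker (ht : t ∈ Submonoid.center G)
    (hχ : χ t = Multiplicative.ofAdd 1) (htA : t ∈ A.ρ.ker)
    [∀ n, Module.Finite k (groupCohomology (Rep.res χ.ker.subtype A) n)] :
    ∀ n, Module.Finite k (groupCohomology A n)
  | 0 =>
    have ⟨φ⟩ := nonempty_groupCohomology_zero_equiv_ker ht hχ htA
    .equiv φ.symm
  | n + 1 =>
    have ⟨φ⟩ := nonempty_groupCohomology_succ_equiv_ker ht hχ htA n
    .equiv φ.symm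

theorem poincareSeries_eq_one_add_X_mul_ker (ht : t ∈ Submonoid.center G)
    (hχ : χ t = Multiplicative.ofAdd 1) (htA : t ∈ A.ρ.ker)
    [∀ n, Module.Finite k (groupCohomology (Rep.res χ.ker.subtype A) n)] :
    poincareSeries A = (1 + PowerSeries.X) * poincareSeries (Rep.res χ.ker.subtype A) := by
  ext n
  rw [add_mul, one_mul, map_add]
  cases n with
  | zero =>
    obtain ⟨φ⟩ := nonempty_groupCohomology_zero_equiv_ker ht hχ htA
    simp only [poincareSeries, PowerSeries.coeff_mk, PowerSeries.coeff_zero_X_mul, add_zero,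
      φ.finrank_eq]
  | succ n =>
    obtain ⟨φ⟩ := nonempty_groupCohomology_succ_equiv_ker ht hχ htA n
    simp only [poincareSeries, PowerSeries.coeff_mk, PowerSeries.coeff_succ_X_mul, φ.finrank_eq,
      Module.finrank_prod, Nat.cast_add, add_comm]

end Ker

section Prod

variable {Z C C' Λ : Type u} [Group Z] [Group C] [Group C'] [Group Λ]

lemma mk_one_mem_center_prod (e : Z ≃* Multiplicative ℤ) (z : Z) :
    ((z, 1) : Z × Λ) ∈ Submonoid.center (Z × Λ) := by
  rw [Submonoid.center_prod, Submonoid.mem_prod]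
  refine ⟨Submonoid.mem_center_iff.2 fun g ↦ e.injective ?_, one_mem _⟩
  rw [map_mul, map_mul, mul_comm]

variable (Λ) in
/-- The identification with `Λ` of the kernel of the composite `Z × Λ → Z ≃ ℤ`. -/
def kerCompFstEquiv (e : Z ≃* Multiplicative ℤ) :
    ((e : Z →* Multiplicative ℤ).comp (MonoidHom.fst Z Λ)).ker ≃* Λ where
  toFun g := g.1.2
  invFun g := ⟨(1, g), map_one e⟩
  left_inv g := Subtype.ext (Prod.ext ((map_eq_one_iff e e.injective).1 g.2).symm rfl)
  right_inv _ := rfl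
  map_mul' _ _ := rfl

theorem finite_and_poincareSeries_res_snd_of_int (e : Z ≃* Multiplicative ℤ) (A : Rep.{u} k Λ)
    (hA : ∀ n, Module.Finite k (groupCohomology A n)) :
    (∀ n, Module.Finite k (groupCohomology (Rep.res (MonoidHom.snd Z Λ) A) n)) ∧
      poincareSeries (Rep.res (MonoidHom.snd Z Λ) A) =
        (1 + PowerSeries.X) * poincareSeries A := by
  let t : Z × Λ := (e.symm (Multiplicative.ofAdd 1), 1)
  let χ : Z × Λ →* Multiplicative ℤ := (e : Z →* Multiplicative ℤ).comp (MonoidHom.fst Z Λ)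
  have ht : t ∈ Submonoid.center (Z × Λ) := mk_one_mem_center_prod e _
  have hχ : χ t = Multiplicative.ofAdd 1 := e.apply_symm_apply _
  have htA : t ∈ (Rep.res (MonoidHom.snd Z Λ) A).ρ.ker := map_one A.ρ
  have hker : ∀ n, Module.Finite k (groupCohomology
      (Rep.res χ.ker.subtype (Rep.res (MonoidHom.snd Z Λ) A)) n) :=
    finite_groupCohomology_res_mulEquiv (kerCompFstEquiv Λ e) A hA
  refine ⟨finite_groupCohomology_of_ker ht hχ htA, ?_⟩
  rw [poincareSeries_eq_one_add_X_mul_ker ht hχ htA,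
    ← poincareSeries_res_mulEquiv (kerCompFstEquiv Λ e) A]
  rfl

lemma finite_and_poincareSeries_res_snd_of_int_prod (ε : C ≃* Z × C') (e : Z ≃* Multiplicative ℤ)
    (A : Rep.{u} k Λ)
    (hA : ∀ n, Module.Finite k (groupCohomology (Rep.res (MonoidHom.snd C' Λ) A) n)) :
    (∀ n, Module.Finite k (groupCohomology (Rep.res (MonoidHom.snd C Λ) A) n)) ∧
      poincareSeries (Rep.res (MonoidHom.snd C Λ) A) =
        (1 + PowerSeries.X) * poincareSeries (Rep.res (MonoidHom.snd C' Λ) A) := by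
  let ε' : C × Λ ≃* Z × (C' × Λ) := (ε.prodCongr (.refl Λ)).trans .prodAssoc
  obtain ⟨hfin, hseries⟩ := finite_and_poincareSeries_res_snd_of_int e _ hA
  have hres : Rep.res (MonoidHom.snd C Λ) A =
      Rep.res (ε' : C × Λ →* Z × (C' × Λ)) (Rep.res (MonoidHom.snd Z (C' × Λ))
        (Rep.res (MonoidHom.snd C' Λ) A)) := rfl
  rw [hres, poincareSeries_res_mulEquiv]
  exact ⟨finite_groupCohomology_res_mulEquiv ε' _ hfin, hseries⟩

theorem finite_and_poincareSeries_res_snd_of_int_pow (r : ℕ) (e : C ≃* Multiplicative (Fin r → ℤ))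
    (A : Rep.{u} k Λ) (hA : ∀ n, Module.Finite k (groupCohomology A n)) :
    (∀ n, Module.Finite k (groupCohomology (Rep.res (MonoidHom.snd C Λ) A) n)) ∧
      poincareSeries (Rep.res (MonoidHom.snd C Λ) A) =
        (1 + PowerSeries.X) ^ r * poincareSeries A := by
  induction r generalizing C with
  | zero =>
    let : Unique C := e.toEquiv.unique
    let ε : C × Λ ≃* Λ := MulEquiv.uniqueProd
    refine ⟨finite_groupCohomology_res_mulEquiv ε A hA, ?_⟩
    rw [pow_zero, one_mul]
    exact poincareSeries_res_mulEquiv ε A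
  | succ r ih =>
    let cons : (Fin (r + 1) → ℤ) ≃+ ℤ × (Fin r → ℤ) :=
      (Fin.consLinearEquiv ℤ fun _ : Fin (r + 1) ↦ ℤ).symm.toAddEquiv
    let ε : C ≃* ULift.{u} (Multiplicative ℤ) × ULift.{u} (Multiplicative (Fin r → ℤ)) :=
      e.trans <| cons.toMultiplicative.trans <|
        (MulEquiv.prodMultiplicative _ _).trans <| MulEquiv.ulift.symm.prodCongr MulEquiv.ulift.symm
    obtain ⟨hfin', hseries'⟩ := ih MulEquiv.ulift
    obtain ⟨hfin, hseries⟩ := finite_and_poincareSeries_res_snd_of_int_prod ε MulEquiv.ulift A hfin'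
    exact ⟨hfin, by rw [hseries, hseries', pow_succ', mul_assoc]⟩

end Prod

end PoincareSeries

section EulerCharacteristic

open Polynomial

variable {k : Type u} [Field k] {G Λ C : Type u} [Group G] [Group Λ] [Group C]

/-- The `r`-th higher Euler characteristic `χ_r` of a group with coefficients in a representation;
`χ_0` is the Euler characteristic. The sum takes the value `0` if it has infinitely many nonzero
terms. -/
def higherEulerChar (r : ℕ) (A : Rep.{u} k G) : ℤ :=
  ∑' p : ℕ, ((-1) ^ (p + r) * p.choose r * Module.finrank k (groupCohomology A p))

lemma tsum_choose_mul_coeff_eq_taylor_coeff (Q : ℤ[X]) (r : ℕ) :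
    ∑' p : ℕ, ((-1) ^ (p + r) * p.choose r * Q.coeff p) = (taylor (-1) Q).coeff r := by
  have hsupp : ∀ p ∉ Q.support, ((-1) ^ (p + r) * p.choose r * Q.coeff p : ℤ) = 0 :=
    fun p hp ↦ by rw [notMem_support_iff.1 hp, mul_zero]
  rw [tsum_eq_sum hsupp, taylor_coeff, hasseDeriv_apply, eval_sum, sum_def]
  refine Finset.sum_congr rfl fun p _ ↦ ?_
  rw [eval_monomial]
  rcases lt_or_ge p r with hpr | hpr
  · simp [Nat.choose_eq_zero_of_lt hpr]
  · have hsign : (-1 : ℤ) ^ (p + r) = (-1) ^ (p - r) := neg_one_pow_congr (by grind)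
    rw [hsign]
    ring

lemma higherEulerChar_eq_taylor_coeff {A : Rep.{u} k G} {Q : ℤ[X]}
    (hQ : poincareSeries A = Q) (r : ℕ) :
    higherEulerChar r A = (taylor (-1) Q).coeff r := by
  rw [← tsum_choose_mul_coeff_eq_taylor_coeff]
  simp only [← coeff_coe, ← hQ, poincareSeries, PowerSeries.coeff_mk, higherEulerChar]

lemma exists_poincareSeries_eq_coe {A : Rep.{u} k G}
    (hA : ∃ N, ∀ p, N < p → Subsingleton (groupCohomology A p)) :
    ∃ P : ℤ[X], poincareSeries A = P := by
  obtain ⟨N, hN⟩ := hA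
  refine ⟨(poincareSeries A).trunc (N + 1), ?_⟩
  ext p
  rw [coeff_coe, PowerSeries.coeff_trunc]
  split_ifs with hp
  · rfl
  · have := hN p (by lia)
    rw [poincareSeries, PowerSeries.coeff_mk, Module.finrank_zero_of_subsingleton, Nat.cast_zero]

theorem stmt_8_general (r : ℕ) (e : C ≃* Multiplicative (Fin r → ℤ)) (A : Rep.{u} k Λ)
    (hfin : ∀ p, Module.Finite k (groupCohomology A p))
    (hvan : ∃ N, ∀ p, N < p → Subsingleton (groupCohomology A p)) :
    higherEulerChar 0 A = higherEulerChar r (Rep.res (MonoidHom.snd C Λ) A) := by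
  obtain ⟨P, hP⟩ := exists_poincareSeries_eq_coe hvan
  have hQ : poincareSeries (Rep.res (MonoidHom.snd C Λ) A) = ((1 + X) ^ r * P : ℤ[X]) := by
    rw [(finite_and_poincareSeries_res_snd_of_int_pow r e A hfin).2, hP]
    push_cast
    rfl
  have htaylor : taylor (-1) ((1 + X) ^ r * P) = X ^ r * taylor (-1) P := by
    rw [taylor_mul, taylor_pow, map_add, taylor_one, taylor_X, map_neg, map_one]
    ring
  rw [higherEulerChar_eq_taylor_coeff hP, higherEulerChar_eq_taylor_coeff hQ, htaylor,
    coeff_X_pow_mul']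
  simp

end EulerCharacteristic

end

/-- For a direct product `Γ = C × Λ` with `C ≅ ℤ^r` central, assuming the rational
group cohomology of `Λ` and of `Γ` is finite-dimensional and vanishes in large
degrees, the Euler characteristic of `Λ` equals the `r`-th higher Euler
characteristic of `Γ`:
`∑_p (−1)^p dim H^p(Λ,ℚ) = ∑_p (−1)^{p+r} C(p,r) dim H^p(Γ,ℚ)`. -/
theorem stmt_8 (r : ℕ) (Λ : Type) [Group Λ]
    (C : Type) [CommGroup C] (e : C ≃* Multiplicative (Fin r → ℤ))
    (hfinΛ : ∀ p : ℕ, FiniteDimensional ℚ (groupCohomology (Rep.trivial ℚ Λ ℚ) p))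
    (hfinΓ : ∀ p : ℕ, FiniteDimensional ℚ (groupCohomology (Rep.trivial ℚ (C × Λ) ℚ) p))
    (hvanΛ : ∃ N : ℕ, ∀ p : ℕ, N < p →
      Subsingleton (groupCohomology (Rep.trivial ℚ Λ ℚ) p))
    (hvanΓ : ∃ N : ℕ, ∀ p : ℕ, N < p →
      Subsingleton (groupCohomology (Rep.trivial ℚ (C × Λ) ℚ) p)) :
    ∑' p : ℕ, ((-1 : ℤ) ^ p *
        (Module.finrank ℚ (groupCohomology (Rep.trivial ℚ Λ ℚ) p) : ℤ)) =
    ∑' p : ℕ, ((-1 : ℤ) ^ (p + r) * (p.choose r : ℤ) *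
        (Module.finrank ℚ (groupCohomology (Rep.trivial ℚ (C × Λ) ℚ) p) : ℤ)) := by
  have h : higherEulerChar 0 (Rep.trivial ℚ Λ ℚ) = higherEulerChar r (Rep.trivial ℚ (C × Λ) ℚ) :=
    stmt_8_general r e _ hfinΛ hvanΛ
  simpa only [higherEulerChar, add_zero, Nat.choose_zero_right, Nat.cast_one, mul_one] using h
end
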